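/- Let V be a vector space over ℂ and let J : ℚ≥0 → End_ℂ(V) be an additive family of linear operators, meaning J(0) = id and J(α) ∘ J(β) = J(α + β) for all nonnegative rationals α, β. Then for every l ≥ 1, coefficients c : Fin l → ℂ and exponents α : Fin l → ℚ≥0, setting T = Σ_{i} c_i · J(α_i), there exist m ∈ ℕ, coefficients d : Fin m → ℂ, exponents β : Fin m → ℚ≥0, a natural number n and coefficients e : Fin (n+1) → ℂ such that, with T̂ = Σ_{k} d_k · J(β_k), one has T̂ ∘ T = T ∘ T̂ = Σ_{j=0}^{n} e_j · J(j), where in the last sum the arguments j are natural numbers coerced into ℚ≥0. -/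

import Mathlib

open scoped NNRat

/-!
With `N` a common denominator of the exponents and `S = J (1/N)`, additivity gives
`J (k/N) = S ^ k`, so `T = p(S)` for a complex polynomial `p`. Factor `p` into linear factors
`X - a`; each divides `X ^ N - a ^ N`, so the product `q ≠ 0` of the cofactors satisfies
`q * p = r(X ^ N)` for some polynomial `r` (`exists_ne_zero_mul_eq_expand`). Evaluating at `S`
and using `S ^ N = J 1` gives `q(S) T = r(J 1)`, which involves natural orders only.

The statement itself does not ask for `T̂` to come from a nonzero polynomial, and `m = 0` would
satisfy it; the `q` constructed here is nonzero, and hence so is `r` whenever `p` is.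
-/

open Polynomial in
/-- Every complex polynomial has a nonzero multiplier `q` turning it into a polynomial in `X ^ N`.
Nonvanishing of `q` is what makes this nontrivial. -/
lemma exists_ne_zero_mul_eq_expand (N : ℕ) (hN : 0 < N) (p : ℂ[X]) :
    ∃ q r : ℂ[X], q ≠ 0 ∧ q * p = expand ℂ N r := by
  have key : ∀ s : Multiset ℂ, ∃ q r : ℂ[X],
      q ≠ 0 ∧ q * (s.map fun a => X - C a).prod = expand ℂ N r := by
    intro s
    induction s using Multiset.induction_on with
    | empty => exact ⟨1, 1, one_ne_zero, by simp⟩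
    | cons a s ih =>
      obtain ⟨q, r, hq, h⟩ := ih
      obtain ⟨g, hg⟩ : X - C a ∣ (X ^ N - C a ^ N : ℂ[X]) := sub_dvd_pow_sub_pow _ _ N
      have hne : (X ^ N - C a ^ N : ℂ[X]) ≠ 0 := by
        rw [← C_pow]
        exact X_pow_sub_C_ne_zero hN _
      have hg0 : g ≠ 0 := by
        rintro rfl
        exact hne (by simpa using hg)
      refine ⟨g * q, (X - C (a ^ N)) * r, mul_ne_zero hg0 hq, ?_⟩
      rw [Multiset.map_cons, Multiset.prod_cons, map_mul, ← h, map_sub, expand_X, expand_C,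
        C_pow, hg]
      ring
  obtain ⟨q, r, hq, h⟩ := key p.roots
  refine ⟨q, C p.leadingCoeff * r, hq, ?_⟩
  rw [map_mul, expand_C, ← h]
  conv_lhs => rw [(IsAlgClosed.splits p).eq_prod_roots]
  ring

/-- An additive family is determined on multiples of an order by powers of one operator. -/
lemma additive_family_pow {V : Type*} [AddCommGroup V] [Module ℂ V]
    {J : ℚ≥0 → Module.End ℂ V} (hJ0 : J 0 = 1)
    (hJadd : ∀ α β : ℚ≥0, J α * J β = J (α + β)) (a : ℚ≥0) (k : ℕ) :
    J a ^ k = J (k * a) := by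
  induction k with
  | zero => simp [hJ0]
  | succ k ih => rw [pow_succ, ih, hJadd]; congr 1; push_cast; ring

lemma exists_common_denominator {l : ℕ} (α : Fin l → ℚ≥0) :
    ∃ N : ℕ, 0 < N ∧ ∃ k : Fin l → ℕ, ∀ i, α i = k i * (1 / (N : ℚ≥0)) := by
  refine ⟨∏ i, (α i).den, Finset.prod_pos fun i _ => (α i).den_pos,
    fun i => (α i).num * ∏ j ∈ Finset.univ.erase i, (α j).den, fun i => ?_⟩
  rw [← Finset.mul_prod_erase Finset.univ (fun j => (α j).den) (Finset.mem_univ i)]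
  have h1 : ((α i).den : ℚ≥0) ≠ 0 := by exact_mod_cast (α i).den_pos.ne'
  have h2 : ((∏ j ∈ Finset.univ.erase i, (α j).den : ℕ) : ℚ≥0) ≠ 0 := by
    exact_mod_cast (Finset.prod_pos fun j _ => (α j).den_pos).ne'
  rw [Nat.cast_mul, Nat.cast_mul, mul_one_div, mul_div_mul_right _ _ h2, NNRat.num_div_den]

/-- Given an additive family `J : ℚ≥0 → End_ℂ(V)` of linear operators on a complex
vector space `V` (`J 0 = id`, `J α ∘ J β = J (α + β)`), every operator
`T = Σ_i c_i • J (α_i)` admits an operator `T̂ = Σ_k d_k • J (β_k)` from the same family such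
that `T̂ ∘ T = T ∘ T̂ = Σ_{j=0}^{n} e_j • J j` with natural-number exponents. -/
theorem additive_family_reduction_to_natural_orders
    (V : Type*) [AddCommGroup V] [Module ℂ V]
    (J : ℚ≥0 → Module.End ℂ V)
    (hJ0 : J 0 = 1)
    (hJadd : ∀ α β : ℚ≥0, J α * J β = J (α + β))
    (l : ℕ) (hl : 1 ≤ l) (c : Fin l → ℂ) (α : Fin l → ℚ≥0) :
    ∃ (m : ℕ) (d : Fin m → ℂ) (β : Fin m → ℚ≥0) (n : ℕ) (e : Fin (n + 1) → ℂ),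
      (∑ k, d k • J (β k)) * (∑ i, c i • J (α i))
          = (∑ i, c i • J (α i)) * (∑ k, d k • J (β k))
        ∧ (∑ k, d k • J (β k)) * (∑ i, c i • J (α i))
          = ∑ j : Fin (n + 1), e j • J ((j : ℕ) : ℚ≥0) := by
  obtain ⟨N, hN, k, hk⟩ := exists_common_denominator α
  have hpow := additive_family_pow hJ0 hJadd
  set S := J (1 / (N : ℚ≥0)) with hS
  have hSN : S ^ N = J 1 := by
    have h : (N : ℚ≥0) ≠ 0 := by exact_mod_cast hN.ne'
    rw [hS, hpow, mul_one_div_cancel h]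
  let p : Polynomial ℂ := ∑ i, Polynomial.C (c i) * Polynomial.X ^ k i
  have hT : ∑ i, c i • J (α i) = Polynomial.aeval S p := by
    simp only [p, map_sum, map_mul, Polynomial.aeval_C, map_pow, Polynomial.aeval_X]
    refine Finset.sum_congr rfl fun i _ => ?_
    rw [hk i, ← hpow, Algebra.smul_def]
  obtain ⟨q, r, -, hqr⟩ := exists_ne_zero_mul_eq_expand N hN p
  have hQ : ∑ i : Fin (q.natDegree + 1), q.coeff i • J ((i : ℕ) * (1 / (N : ℚ≥0)))
      = Polynomial.aeval S q := by
    rw [Polynomial.aeval_eq_sum_range, ← Fin.sum_univ_eq_sum_range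
      (fun i => q.coeff i • S ^ i)]
    exact Finset.sum_congr rfl fun i _ => by rw [← hpow]
  refine ⟨q.natDegree + 1, fun i => q.coeff i, fun i => (i : ℕ) * (1 / (N : ℚ≥0)),
    r.natDegree, fun j => r.coeff j, ?_, ?_⟩
  · rw [hQ, hT, ← map_mul, ← map_mul, mul_comm]
  · rw [hQ, hT, ← map_mul, hqr, Polynomial.expand_aeval, hSN, Polynomial.aeval_eq_sum_range,
      ← Fin.sum_univ_eq_sum_range (fun i => r.coeff i • J 1 ^ i)]
    exact Finset.sum_congr rfl fun i _ => by rw [hpow, mul_one]
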